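/- Let p ≥ 1 and N ≥ 10p + 1 be integers, and let f(x) = x^p + x^N. Then there exists a polynomial P of degree at most p (of the form P(x) = x^p + c with c ∈ ℂ, c ≠ 0 sufficiently small) such that the equation f(x) = P(x) has exactly N solutions in D_{1/3}, counted with multiplicity. In particular, f is not (p, N−1)-valent in D_{1/3}. -/

import Mathlib

-- The order of vanishing of `g` at `z` (zero if `g` is not analytic at `z`).
open scoped Classical in
noncomputable def ordAt (g : ℂ → ℂ) (z : ℂ) : ℕ∞ :=
  if h : AnalyticAt ℂ g z then analyticOrderAt g z else 0

/-- The number of zeroes of `g` in `Ω`, counted with multiplicity. -/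
noncomputable def solCount (g : ℂ → ℂ) (Ω : Set ℂ) : ℕ∞ :=
  ∑' z : Ω, ordAt g z

/-- `f` is `(s,p)`-valent in `Ω`: for every polynomial `P` of degree at most `s`,
the equation `f = P` has at most `p` solutions in `Ω`, counted with multiplicity. -/
def IsSPValentOn (f : ℂ → ℂ) (Ω : Set ℂ) (s p : ℕ) : Prop :=
  ∀ P : Polynomial ℂ, P.degree ≤ (s : ℕ) →
    solCount (fun z => f z - P.eval z) Ω ≤ (p : ℕ∞)

/-- `g` is `p`-valent in `Ω`: for every constant `c`, the equation `g = c` has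
at most `p` solutions in `Ω`, counted with multiplicity. -/
def IsPValentOn (g : ℂ → ℂ) (Ω : Set ℂ) (p : ℕ) : Prop :=
  ∀ c : ℂ, solCount (fun z => g z - c) Ω ≤ (p : ℕ∞)

/-!
Subtracting `x ^ p + c` from `x ^ p + x ^ N` leaves `x ^ N - c`, all of whose roots have modulus
`‖c‖ ^ (1 / N)`. Once `‖c‖ < r ^ N` they all lie in the disk of radius `r`, and since the vanishing
order of a polynomial at a point is its root multiplicity there, they number `N`.
-/

open Polynomial Metric

theorem exists_eval_eq_sub_pow_rootMultiplicity_mul {R : Type*} [CommRing R] [IsDomain R]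
    {Q : R[X]} (hQ : Q ≠ 0) (a : R) :
    ∃ S : R[X], S.eval a ≠ 0 ∧ ∀ z, Q.eval z = (z - a) ^ Q.rootMultiplicity a * S.eval z := by
  obtain ⟨S, hS, hndvd⟩ := exists_eq_pow_rootMultiplicity_mul_and_not_dvd Q hQ a
  refine ⟨S, fun hSa => hndvd (dvd_iff_isRoot.2 hSa), fun z => ?_⟩
  nth_rw 1 [hS]
  simp only [eval_mul, eval_pow, eval_sub, eval_X, eval_C]

theorem analyticOrderAt_eval_eq_rootMultiplicity {𝕜 : Type*} [NontriviallyNormedField 𝕜]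
    {Q : 𝕜[X]} (hQ : Q ≠ 0) (a : 𝕜) :
    analyticOrderAt (fun z => Q.eval z) a = Q.rootMultiplicity a := by
  obtain ⟨S, hSa, hS⟩ := exists_eval_eq_sub_pow_rootMultiplicity_mul hQ a
  exact (AnalyticOnNhd.eval_polynomial Q a trivial).analyticOrderAt_eq_natCast.2
    ⟨fun z => S.eval z, AnalyticOnNhd.eval_polynomial S a trivial, hSa, .of_forall hS⟩

theorem ordAt_eq_analyticOrderAt (g : ℂ → ℂ) (z : ℂ) : ordAt g z = analyticOrderAt g z := by
  unfold ordAt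
  split_ifs with hg
  · rfl
  · exact (analyticOrderAt_of_not_analyticAt hg).symm

open scoped Classical in
theorem solCount_eval_eq_card_filter_roots {Q : ℂ[X]} (hQ : Q ≠ 0) (Ω : Set ℂ) :
    solCount (fun z => Q.eval z) Ω = (Q.roots.filter (· ∈ Ω)).card := by
  have hterm (z : ℂ) :
      Ω.indicator (ordAt fun w => Q.eval w) z = ((Q.roots.filter (· ∈ Ω)).count z : ℕ∞) := by
    rw [Multiset.count_filter, Set.indicator_apply]
    split_ifs
    · rw [ordAt_eq_analyticOrderAt, analyticOrderAt_eval_eq_rootMultiplicity hQ, count_roots]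
    · rfl
  calc solCount (fun z => Q.eval z) Ω
      = ∑' z, ((Q.roots.filter (· ∈ Ω)).count z : ℕ∞) := by
        rw [solCount, tsum_subtype Ω (ordAt fun z => Q.eval z), tsum_congr hterm]
    _ = ∑ z ∈ (Q.roots.filter (· ∈ Ω)).toFinset, ((Q.roots.filter (· ∈ Ω)).count z : ℕ∞) :=
        tsum_eq_sum fun z hz => by
          rw [Multiset.count_eq_zero.2 fun hmem => hz (Multiset.mem_toFinset.2 hmem), Nat.cast_zero]
    _ = (Q.roots.filter (· ∈ Ω)).card := by
        rw [← Nat.cast_sum, Multiset.toFinset_sum_count_eq]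

theorem solCount_eval_eq_natDegree {Q : ℂ[X]} (hQ : Q ≠ 0) {Ω : Set ℂ}
    (hΩ : ∀ z, Q.IsRoot z → z ∈ Ω) :
    solCount (fun z => Q.eval z) Ω = Q.natDegree := by
  classical
  rw [solCount_eval_eq_card_filter_roots hQ,
    Multiset.filter_eq_self.2 fun z hz => hΩ z (isRoot_of_mem_roots hz),
    (IsAlgClosed.splits Q).natDegree_eq_card_roots]

theorem solCount_pow_sub_const_ball {N : ℕ} (hN : N ≠ 0) {r : ℝ} (hr : 0 ≤ r) {c : ℂ}
    (hc : ‖c‖ < r ^ N) : solCount (fun z => z ^ N - c) (ball 0 r) = N := by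
  have hroots (z : ℂ) (hz : (X ^ N - C c).IsRoot z) : z ∈ ball 0 r := by
    have hzN : z ^ N = c := by simpa [sub_eq_zero] using hz
    exact mem_ball_zero_iff.2 (lt_of_pow_lt_pow_left₀ N hr (by rwa [← norm_pow, hzN]))
  simpa using solCount_eval_eq_natDegree (X_pow_sub_C_ne_zero (Nat.pos_of_ne_zero hN) c) hroots

theorem statement10_general {p N : ℕ} (hN : N ≠ 0) {Q : ℂ[X]} (hQ : Q.degree ≤ p)
    {r : ℝ} (hr : 0 ≤ r) {c : ℂ} (hc : ‖c‖ < r ^ N) :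
    solCount (fun z => (Q.eval z + z ^ N) - (Q.eval z + c)) (ball 0 r) = N ∧
      ¬ IsSPValentOn (fun z => Q.eval z + z ^ N) (ball 0 r) p (N - 1) := by
  have hcount :
      solCount (fun z => (Q.eval z + z ^ N) - (Q.eval z + c)) (ball 0 r) = N := by
    simpa only [add_sub_add_left_eq_sub] using solCount_pow_sub_const_ball hN hr hc
  refine ⟨hcount, fun hvalent => ?_⟩
  have hdegree : (Q + C c).degree ≤ p :=
    degree_add_le_of_degree_le hQ (degree_C_le.trans (Nat.cast_nonneg p))
  have hle := hvalent (Q + C c) hdegree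
  simp only [eval_add, eval_C, hcount, Nat.cast_le] at hle
  omega

/-- For `f(x) = x^p + x^N` with `N ≥ 10p + 1`, there is a polynomial `P(x) = x^p + c`
(with `c ≠ 0`) such that `f = P` has exactly `N` solutions in `D_{1/3}`, counted with
multiplicity; in particular `f` is not `(p, N-1)`-valent in `D_{1/3}`. -/
theorem statement10 (p N : ℕ) (hp : 1 ≤ p) (hN : 10 * p + 1 ≤ N) :
    ∃ c : ℂ, c ≠ 0 ∧
      solCount (fun z : ℂ => (z ^ p + z ^ N) - (z ^ p + c))
        (Metric.ball (0 : ℂ) (1 / 3)) = (N : ℕ∞) ∧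
      ¬ IsSPValentOn (fun z : ℂ => z ^ p + z ^ N)
        (Metric.ball (0 : ℂ) (1 / 3)) p (N - 1) := by
  have hc : ‖(1 / 4 : ℂ) ^ N‖ < (1 / 3 : ℝ) ^ N := by
    rw [norm_pow]
    exact pow_lt_pow_left₀ (by norm_num) (norm_nonneg _) (by omega)
  refine ⟨(1 / 4) ^ N, pow_ne_zero N (by norm_num), ?_⟩
  simpa only [eval_pow, eval_X] using
    statement10_general (by omega) (degree_X_pow_le p) (by norm_num) hc
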